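/- Main eigenvalue bound: let q ≥ 2 be an integer, β ∈ (0,1/2], V(x) = (x(1-x))^β, ψ_i(x) = Σ_{j=i+1}^q C(q,j)x^j(1-x)^{q-j}, and (T_q V)(x) = (1/q)Σ_{i=0}^{q-1} V(ψ_i(x)). Then for all x ∈ (0,1), (T_q V)(x) ≤ (6/√(qβ))·(1/4)^{1/2-β}·V(x). -/

import Mathlib

/-- Binomial tail probability `ψ_i(x) = P(Bin(q,x) ≥ i+1)`. -/
noncomputable def psi (q i : ℕ) (x : ℝ) : ℝ :=
  ∑ j ∈ Finset.Icc (i + 1) q, (q.choose j : ℝ) * x ^ j * (1 - x) ^ (q - j)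

/-- The Lyapunov function `V(x) = (x(1-x))^β`. -/
noncomputable def Vfun (β x : ℝ) : ℝ := (x * (1 - x)) ^ β

lemma pmf_nonneg {x : ℝ} (hx0 : 0 ≤ x) (hx1 : x ≤ 1) (q j : ℕ) :
    0 ≤ (q.choose j : ℝ) * x ^ j * (1 - x) ^ (q - j) := by
  have : 0 ≤ 1 - x := by linarith
  positivity

lemma pmf_sum (x : ℝ) (q : ℕ) :
    ∑ j ∈ Finset.range (q + 1), (q.choose j : ℝ) * x ^ j * (1 - x) ^ (q - j) = 1 := by
  have h := add_pow x (1 - x) q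
  rw [show x + (1 - x) = 1 by ring, one_pow] at h
  refine Eq.trans ?_ h.symm
  exact Finset.sum_congr rfl fun j _ => by ring

lemma psi_nonneg {x : ℝ} (hx0 : 0 ≤ x) (hx1 : x ≤ 1) (q i : ℕ) : 0 ≤ psi q i x :=
  Finset.sum_nonneg fun j _ => pmf_nonneg hx0 hx1 q j

/-- complementary sum -/
lemma psi_compl (x : ℝ) (q i : ℕ) (hi : i < q) :
    1 - psi q i x = ∑ j ∈ Finset.range (i + 1), (q.choose j : ℝ) * x ^ j * (1 - x) ^ (q - j) := by
  have h := pmf_sum x q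
  rw [← Finset.sum_range_add_sum_Ico _ (show i + 1 ≤ q + 1 by omega)] at h
  have e : Finset.Ico (i + 1) (q + 1) = Finset.Icc (i + 1) q := by ext; simp
  rw [e] at h
  unfold psi
  linarith

lemma psi_symm (x : ℝ) (q i : ℕ) (hi : i < q) :
    1 - psi q i x = psi q (q - 1 - i) (1 - x) := by
  rw [psi_compl x q i hi, psi]
  refine Finset.sum_bij' (fun j _ => q - j) (fun j _ => q - j) ?_ ?_ ?_ ?_ ?_
  · intro j hj; simp at hj ⊢; omega
  · intro j hj; simp at hj ⊢; omega
  · intro j hj; simp at hj ⊢; omega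
  · intro j hj; simp at hj ⊢; omega
  · intro j hj
    simp at hj
    rw [Nat.choose_symm (by omega), show q - (q - j) = j by omega]
    ring

lemma psi_le_one {x : ℝ} (hx0 : 0 ≤ x) (hx1 : x ≤ 1) (q i : ℕ) (hi : i < q) : psi q i x ≤ 1 := by
  have h := psi_symm x q i hi
  have := psi_nonneg (x := 1 - x) (by linarith) (by linarith) q (q - 1 - i)
  linarith

lemma exp_quad {u : ℝ} (hu : |u| ≤ 1) : Real.exp u ≤ 1 + u + 3 / 4 * u ^ 2 := by
  have h := Real.exp_bound hu (n := 3) (by norm_num)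
  have h1 := (abs_le.mp h).2
  simp [Finset.sum_range_succ, Nat.factorial] at h1
  have h2 : |u| ^ 3 ≤ u ^ 2 := by
    rw [← sq_abs u]
    nlinarith [abs_nonneg u, sq_nonneg |u|]
  norm_num at h1
  nlinarith [sq_nonneg u]

lemma mgf_one {x t : ℝ} (hx0 : 0 ≤ x) (hx1 : x ≤ 1) (ht0 : 0 ≤ t) (ht1 : t ≤ 1) :
    x * Real.exp t + (1 - x) ≤ Real.exp (t * x + 3 / 4 * t ^ 2 * (x * (1 - x))) := by
  have h1 : Real.exp (t * (1 - x)) ≤ 1 + t * (1 - x) + 3 / 4 * (t * (1 - x)) ^ 2 := by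
    apply exp_quad
    rw [abs_le]; constructor <;> nlinarith
  have h2 : Real.exp (-(t * x)) ≤ 1 + (-(t * x)) + 3 / 4 * (-(t * x)) ^ 2 := by
    apply exp_quad
    rw [abs_le]; constructor <;> nlinarith
  have h3 := Real.add_one_le_exp (3 / 4 * t ^ 2 * (x * (1 - x)))
  have e1 : Real.exp t = Real.exp (t * x) * Real.exp (t * (1 - x)) := by
    rw [← Real.exp_add]; congr 1; ring
  have e2 : Real.exp (t * x) * Real.exp (-(t * x)) = 1 := by
    rw [← Real.exp_add]; simp
  rw [Real.exp_add]
  have h4 : x * Real.exp (t * (1 - x)) + (1 - x) * Real.exp (-(t * x)) ≤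
      Real.exp (3 / 4 * t ^ 2 * (x * (1 - x))) := by
    have := mul_le_mul_of_nonneg_left h1 hx0
    have := mul_le_mul_of_nonneg_left h2 (sub_nonneg.2 hx1)
    nlinarith
  calc x * Real.exp t + (1 - x) = Real.exp (t * x) *
        (x * Real.exp (t * (1 - x)) + (1 - x) * Real.exp (-(t * x))) := by
        rw [e1]; linear_combination (-(1 - x)) * e2
    _ ≤ _ := mul_le_mul_of_nonneg_left h4 (Real.exp_pos _).le

lemma chernoff {x t : ℝ} (hx0 : 0 ≤ x) (hx1 : x ≤ 1) (ht0 : 0 ≤ t) (ht1 : t ≤ 1) (q i : ℕ) :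
    psi q i x ≤ Real.exp (3 / 4 * t ^ 2 * (q * (x * (1 - x))) - t * (i + 1 - q * x)) := by
  have h1 : psi q i x * Real.exp (t * (i + 1)) ≤ (x * Real.exp t + (1 - x)) ^ q := by
    rw [add_pow, psi, Finset.sum_mul]
    calc _ ≤ ∑ j ∈ Finset.Icc (i + 1) q,
          (x * Real.exp t) ^ j * (1 - x) ^ (q - j) * (q.choose j : ℝ) := by
          refine Finset.sum_le_sum fun j hj => ?_
          have hj' : ((i : ℝ) + 1) ≤ j := by exact_mod_cast (Finset.mem_Icc.1 hj).1
          have : Real.exp (t * (i + 1)) ≤ Real.exp t ^ j := by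
            rw [← Real.exp_nat_mul]
            apply Real.exp_le_exp.2
            nlinarith
          calc _ ≤ (q.choose j : ℝ) * x ^ j * (1 - x) ^ (q - j) * Real.exp t ^ j :=
                mul_le_mul_of_nonneg_left this (pmf_nonneg hx0 hx1 q j)
            _ = _ := by rw [mul_pow]; ring
      _ ≤ _ := by
          refine Finset.sum_le_sum_of_subset_of_nonneg ?_ ?_
          · intro j hj; simp at hj ⊢; omega
          · intro j _ _
            have : 0 ≤ 1 - x := by linarith
            positivity
  have h2 : (x * Real.exp t + (1 - x)) ^ q ≤
      Real.exp (q * (t * x + 3 / 4 * t ^ 2 * (x * (1 - x)))) := by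
    rw [Real.exp_nat_mul]
    have : 0 ≤ 1 - x := by linarith
    exact pow_le_pow_left₀ (by positivity) (mgf_one hx0 hx1 ht0 ht1) q
  rw [← le_div_iff₀ (Real.exp_pos _)] at h1
  refine h1.trans ((div_le_div_of_nonneg_right h2 (Real.exp_pos _).le).trans ?_)
  rw [← Real.exp_sub]
  apply le_of_eq; congr 1; ring

lemma chernoff' {x t : ℝ} (hx0 : 0 ≤ x) (hx1 : x ≤ 1) (ht0 : 0 ≤ t) (ht1 : t ≤ 1) (q i : ℕ)
    (hi : i < q) :
    1 - psi q i x ≤ Real.exp (3 / 4 * t ^ 2 * (q * (x * (1 - x))) - t * (q * x - i)) := by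
  rw [psi_symm x q i hi]
  refine (chernoff (by linarith) (by linarith) ht0 ht1 q _).trans (le_of_eq ?_)
  congr 1
  rw [show q - 1 - i = q - (i + 1) by omega, Nat.cast_sub (by omega)]
  push_cast
  ring

lemma psi_le_choose {x : ℝ} (hx0 : 0 ≤ x) (hx1 : x ≤ 1) (q i : ℕ) (hi : i < q) :
    psi q i x ≤ (q.choose (i + 1) : ℝ) * x ^ (i + 1) := by
  have h := pmf_sum x (q - (i + 1))
  have e : (q.choose (i + 1) : ℝ) * x ^ (i + 1) =
      ∑ j ∈ Finset.Icc (i + 1) q, (q.choose (i + 1) : ℝ) * x ^ (i + 1) *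
        (((q - (i + 1)).choose (j - (i + 1)) : ℝ) * x ^ (j - (i + 1)) * (1 - x) ^ (q - j)) := by
    rw [← Finset.mul_sum]
    have : ∑ j ∈ Finset.Icc (i + 1) q, (((q - (i + 1)).choose (j - (i + 1)) : ℝ) *
        x ^ (j - (i + 1)) * (1 - x) ^ (q - j)) = 1 := by
      refine Eq.trans ?_ h
      refine Finset.sum_bij' (fun j _ => j - (i + 1)) (fun j _ => j + (i + 1)) ?_ ?_ ?_ ?_ ?_
      · intro j hj; simp at hj ⊢; omega
      · intro j hj; simp at hj ⊢; omega
      · intro j hj; simp at hj ⊢; omega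
      · intro j hj; simp at hj ⊢
      · intro j hj
        simp at hj
        rw [show q - (i + 1) - (j - (i + 1)) = q - j by omega]
    rw [this, mul_one]
  rw [e, psi]
  refine Finset.sum_le_sum fun j hj => ?_
  rw [Finset.mem_Icc] at hj
  have hc : (q.choose j : ℝ) ≤ (q.choose (i + 1) : ℝ) * ((q - (i + 1)).choose (j - (i + 1)) : ℝ) := by
    have := Nat.choose_mul (n := q) hj.1
    have h2 : 1 ≤ j.choose (i + 1) := Nat.choose_pos hj.1
    have h3 : q.choose j ≤ q.choose (i + 1) * (q - (i + 1)).choose (j - (i + 1)) := by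
      rw [← this]; exact Nat.le_mul_of_pos_right _ h2
    exact_mod_cast h3
  have h0 : 0 ≤ 1 - x := by linarith
  calc _ ≤ ((q.choose (i + 1) : ℝ) * ((q - (i + 1)).choose (j - (i + 1)) : ℝ)) * x ^ j *
        (1 - x) ^ (q - j) := by gcongr
    _ = _ := by
      have : x ^ j = x ^ (i + 1) * x ^ (j - (i + 1)) := by
        rw [← pow_add]; congr 1; omega
      rw [this]; ring

lemma mean_eq (x : ℝ) (q : ℕ) :
    ∑ j ∈ Finset.range (q + 1), (j : ℝ) * ((q.choose j : ℝ) * x ^ j * (1 - x) ^ (q - j)) = q * x := by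
  have h := congrArg (Polynomial.eval x) (bernsteinPolynomial.sum_smul ℝ q)
  simpa [Polynomial.eval_finsetSum, bernsteinPolynomial] using h

lemma var_eq (x : ℝ) (q : ℕ) :
    ∑ j ∈ Finset.range (q + 1), (q * x - j) ^ 2 * ((q.choose j : ℝ) * x ^ j * (1 - x) ^ (q - j))
      = q * x * (1 - x) := by
  have h := congrArg (Polynomial.eval x) (bernsteinPolynomial.variance ℝ q)
  simpa [Polynomial.eval_finsetSum, bernsteinPolynomial] using h

lemma psi_var {x : ℝ} (hx0 : 0 ≤ x) (hx1 : x ≤ 1) (q i : ℕ) (hi : i < q) :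
    psi q i x * (1 - psi q i x) ≤ q * (x * (1 - x)) := by
  set p : ℕ → ℝ := fun j => (q.choose j : ℝ) * x ^ j * (1 - x) ^ (q - j) with hp
  have hp0 : ∀ j, 0 ≤ p j := pmf_nonneg hx0 hx1 q
  have hs : ∀ f : ℕ → ℝ, ∑ j ∈ Finset.range (q + 1), f j * p j =
      ∑ j ∈ Finset.range (i + 1), f j * p j + ∑ j ∈ Finset.Icc (i + 1) q, f j * p j := by
    intro f
    rw [← Finset.sum_range_add_sum_Ico _ (show i + 1 ≤ q + 1 by omega)]
    congr 2
  have hP : psi q i x = ∑ j ∈ Finset.Icc (i + 1) q, p j := rfl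
  have hQ : 1 - psi q i x = ∑ j ∈ Finset.range (i + 1), p j := psi_compl x q i hi
  set P := psi q i x
  have hm : ∑ j ∈ Finset.range (q + 1), ((j : ℝ) - q * x) * p j = 0 := by
    have h1 := mean_eq x q
    have h2 := pmf_sum x q
    simp only [sub_mul, Finset.sum_sub_distrib, ← Finset.mul_sum]
    rw [h1, h2]; ring
  rw [hs] at hm
  set E := ∑ j ∈ Finset.Icc (i + 1) q, ((j : ℝ) - q * x) * p j with hE
  have hE1 : (i + 1 - q * x) * P ≤ E := by
    rw [hP, Finset.mul_sum]
    refine Finset.sum_le_sum fun j hj => mul_le_mul_of_nonneg_right ?_ (hp0 j)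
    have : ((i : ℝ) + 1) ≤ j := by exact_mod_cast (Finset.mem_Icc.1 hj).1
    linarith
  have hE2 : (q * x - i) * (1 - P) ≤ E := by
    have : ∑ j ∈ Finset.range (i + 1), ((j : ℝ) - q * x) * p j ≤ (i - q * x) * (1 - P) := by
      rw [hQ, Finset.mul_sum]
      refine Finset.sum_le_sum fun j hj => mul_le_mul_of_nonneg_right ?_ (hp0 j)
      have : (j : ℝ) ≤ i := by exact_mod_cast Nat.lt_succ_iff.1 (Finset.mem_range.1 hj)
      linarith
    linarith
  have hP0 : 0 ≤ P := psi_nonneg hx0 hx1 q i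
  have hP1 : P ≤ 1 := psi_le_one hx0 hx1 q i hi
  have hEP : P * (1 - P) ≤ E := by
    have := mul_le_mul_of_nonneg_left hE1 (sub_nonneg.2 hP1)
    have := mul_le_mul_of_nonneg_left hE2 hP0
    nlinarith
  have hv := var_eq x q
  have hv' := hs (fun j => (q * x - j) ^ 2)
  rw [hv] at hv'
  have g1 : ∑ j ∈ Finset.range (i + 1), (2 * (-P) * ((j : ℝ) - q * x) - P ^ 2) * p j ≤
      ∑ j ∈ Finset.range (i + 1), (q * x - j) ^ 2 * p j := by
    refine Finset.sum_le_sum fun j hj => mul_le_mul_of_nonneg_right ?_ (hp0 j)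
    nlinarith [sq_nonneg (((j : ℝ) - q * x) + P)]
  have g2 : ∑ j ∈ Finset.Icc (i + 1) q, (2 * (1 - P) * ((j : ℝ) - q * x) - (1 - P) ^ 2) * p j ≤
      ∑ j ∈ Finset.Icc (i + 1) q, (q * x - j) ^ 2 * p j := by
    refine Finset.sum_le_sum fun j hj => mul_le_mul_of_nonneg_right ?_ (hp0 j)
    nlinarith [sq_nonneg (((j : ℝ) - q * x) - (1 - P))]
  have lin : ∀ (A : Finset ℕ) (a b : ℝ), ∑ j ∈ A, (2 * a * ((j : ℝ) - q * x) - b) * p j =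
      2 * a * ∑ j ∈ A, ((j : ℝ) - q * x) * p j - b * ∑ j ∈ A, p j := by
    intro A a b
    rw [Finset.mul_sum, Finset.mul_sum, ← Finset.sum_sub_distrib]
    exact Finset.sum_congr rfl fun j _ => by ring
  rw [lin, ← hQ] at g1
  rw [lin, ← hP, ← hE] at g2
  have hm' : ∑ j ∈ Finset.range (i + 1), ((j : ℝ) - q * x) * p j = -E := by linarith
  rw [hm'] at g1
  nlinarith

lemma geo_exp {τ : ℝ} (hτ : 0 < τ) (n : ℕ) :
    ∑ k ∈ Finset.range n, Real.exp (-(τ * k)) ≤ 1 + 1 / τ := by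
  have hr : Real.exp (-τ) ≤ 1 / (1 + τ) := by
    rw [Real.exp_neg, ← one_div]
    exact one_div_le_one_div_of_le (by linarith) (by linarith [Real.add_one_le_exp τ])
  have h1 : ∀ k : ℕ, Real.exp (-(τ * k)) = Real.exp (-τ) ^ k := by
    intro k; rw [← Real.exp_nat_mul]; congr 1; ring
  simp_rw [h1]
  have h0 := Real.exp_pos (-τ)
  have h2 : (1 - Real.exp (-τ)) * ∑ k ∈ Finset.range n, Real.exp (-τ) ^ k ≤ 1 := by
    rw [mul_neg_geom_sum]; linarith [pow_pos h0 n]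
  have h3 : τ / (1 + τ) ≤ 1 - Real.exp (-τ) := by
    have : τ / (1 + τ) = 1 - 1 / (1 + τ) := by field_simp; ring
    linarith
  have hS : 0 ≤ ∑ k ∈ Finset.range n, Real.exp (-τ) ^ k := by positivity
  have h4 := (mul_le_mul_of_nonneg_right h3 hS).trans h2
  rw [div_mul_eq_mul_div, div_le_one (by linarith)] at h4
  rw [show 1 + 1 / τ = (1 + τ) / τ by field_simp; ring, le_div_iff₀ hτ]
  linarith

lemma two_sided {τ K μ : ℝ} (hτ : 0 < τ) (hK : 0 ≤ K) (hμ : 0 ≤ μ) (q : ℕ) (f : ℕ → ℝ)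
    (h1 : ∀ i < q, f i ≤ K * Real.exp (-(τ * (i + 1 - μ))))
    (h2 : ∀ i < q, f i ≤ K * Real.exp (-(τ * (μ - i)))) :
    ∑ i ∈ Finset.range q, f i ≤ K * (2 / τ + 1) := by
  set m := ⌊μ⌋₊
  have hm1 : (m : ℝ) ≤ μ := Nat.floor_le hμ
  have hm2 : μ < m + 1 := Nat.lt_floor_add_one μ
  have a1 : ∑ i ∈ Finset.range q, f i ≤
      ∑ i ∈ Finset.range q, K * Real.exp (-(τ * |(i : ℝ) - m|)) := by
    refine Finset.sum_le_sum fun i hi => ?_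
    have hi := Finset.mem_range.1 hi
    rcases le_total (i : ℝ) m with h | h
    · refine (h2 i hi).trans (mul_le_mul_of_nonneg_left (Real.exp_le_exp.2 ?_) hK)
      rw [abs_of_nonpos (by linarith)]
      nlinarith
    · refine (h1 i hi).trans (mul_le_mul_of_nonneg_left (Real.exp_le_exp.2 ?_) hK)
      rw [abs_of_nonneg (by linarith)]
      nlinarith
  refine a1.trans ?_
  rw [← Finset.mul_sum]
  refine mul_le_mul_of_nonneg_left ?_ hK
  calc ∑ i ∈ Finset.range q, Real.exp (-(τ * |(i : ℝ) - m|))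
      ≤ ∑ i ∈ Finset.range (m + (1 + q)), Real.exp (-(τ * |(i : ℝ) - m|)) := by
        refine Finset.sum_le_sum_of_subset_of_nonneg ?_ fun _ _ _ => (Real.exp_pos _).le
        intro j hj; simp at hj ⊢; omega
    _ = ∑ i ∈ Finset.range m, Real.exp (-(τ * |(i : ℝ) - m|)) +
        ∑ i ∈ Finset.range (1 + q), Real.exp (-(τ * |((m + i : ℕ) : ℝ) - m|)) :=
        Finset.sum_range_add _ _ _
    _ ≤ 1 / τ + (1 + 1 / τ) := by
        refine add_le_add ?_ ?_
        · rw [← Finset.sum_range_reflect]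
          have hg := geo_exp hτ (m + 1)
          rw [Finset.sum_range_succ'] at hg
          simp only [Nat.cast_zero, mul_zero, neg_zero, Real.exp_zero] at hg
          have : ∑ j ∈ Finset.range m, Real.exp (-(τ * |((m - 1 - j : ℕ) : ℝ) - m|)) =
              ∑ k ∈ Finset.range m, Real.exp (-(τ * ((k + 1 : ℕ) : ℝ))) := by
            refine Finset.sum_congr rfl fun j hj => ?_
            have hj := Finset.mem_range.1 hj
            rw [show m - 1 - j = m - (j + 1) by omega, Nat.cast_sub (by omega)]
            rw [show (m : ℝ) - ((j + 1 : ℕ) : ℝ) - m = -((j + 1 : ℕ) : ℝ) by ring, abs_neg,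
              Nat.abs_cast]
          rw [this]; linarith
        · refine le_trans (le_of_eq ?_) (geo_exp hτ (1 + q))
          refine Finset.sum_congr rfl fun j hj => ?_
          push_cast
          rw [add_sub_cancel_left, Nat.abs_cast]
    _ = 2 / τ + 1 := by ring

lemma S_chern {x t β : ℝ} (hx0 : 0 ≤ x) (hx1 : x ≤ 1) (ht0 : 0 < t) (ht1 : t ≤ 1) (hβ : 0 < β)
    (q : ℕ) :
    ∑ i ∈ Finset.range q, Vfun β (psi q i x) ≤
      Real.exp (3 / 4 * (β * t ^ 2 * (q * (x * (1 - x))))) * (2 / (β * t) + 1) := by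
  refine two_sided (μ := q * x) (by positivity) (Real.exp_pos _).le (by positivity) q _ ?_ ?_
  · intro i hi
    have h0 := psi_nonneg hx0 hx1 q i
    have h1 := psi_le_one hx0 hx1 q i hi
    have h := chernoff hx0 hx1 ht0.le ht1 q i
    rw [Vfun, ← Real.exp_add]
    have h2 : psi q i x * (1 - psi q i x) ≤ psi q i x := by nlinarith
    calc _ ≤ (Real.exp (3 / 4 * t ^ 2 * (q * (x * (1 - x))) - t * (i + 1 - q * x))) ^ β :=
          Real.rpow_le_rpow (mul_nonneg h0 (by linarith)) (h2.trans h) hβ.le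
      _ = _ := by
          rw [← Real.exp_mul]; congr 1; ring
  · intro i hi
    have h0 := psi_nonneg hx0 hx1 q i
    have h1 := psi_le_one hx0 hx1 q i hi
    have h := chernoff' hx0 hx1 ht0.le ht1 q i hi
    rw [Vfun, ← Real.exp_add]
    have h2 : psi q i x * (1 - psi q i x) ≤ 1 - psi q i x := by nlinarith
    calc _ ≤ (Real.exp (3 / 4 * t ^ 2 * (q * (x * (1 - x))) - t * (q * x - i))) ^ β :=
          Real.rpow_le_rpow (mul_nonneg h0 (by linarith)) (h2.trans h) hβ.le
      _ = _ := by
          rw [← Real.exp_mul]; congr 1; ring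

lemma S_symm (x β : ℝ) (q : ℕ) :
    ∑ i ∈ Finset.range q, Vfun β (psi q i (1 - x)) = ∑ i ∈ Finset.range q, Vfun β (psi q i x) := by
  rw [← Finset.sum_range_reflect]
  refine Finset.sum_congr rfl fun i hi => ?_
  have hi := Finset.mem_range.1 hi
  rw [← psi_symm x q i hi, Vfun, Vfun]
  congr 1; ring

lemma S_small {x β : ℝ} (hx0 : 0 < x) (hx1 : x ≤ 1 / 2) (hβ : 0 < β) (hβ1 : β ≤ 1 / 2)
    (q : ℕ) (hq : 8 ≤ q) (hs : q * (x * (1 - x)) ≤ 1) :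
    ∑ i ∈ Finset.range q, Vfun β (psi q i x) ≤ 3 / β * (q * (x * (1 - x))) ^ β := by
  have hq' : (8 : ℝ) ≤ q := by exact_mod_cast hq
  have hxs : x * (1 - x) ≤ 1 / 8 := by nlinarith
  have hx2 : x ≤ 3 / 20 := by nlinarith
  have hμ : (q : ℝ) * x ≤ 6 / 5 := by nlinarith
  have hμ2 : (q : ℝ) * x ≤ 6 / 5 * (q * (x * (1 - x))) := by
    have : 0 < (q : ℝ) * x := by positivity
    nlinarith
  have hfac : ∀ i : ℕ, (2 : ℝ) ^ i ≤ ((i + 1).factorial : ℝ) := by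
    intro i
    induction i with
    | zero => simp
    | succ n ih =>
      rw [pow_succ, Nat.factorial_succ]
      push_cast
      have : (0 : ℝ) ≤ n := Nat.cast_nonneg n
      nlinarith [pow_pos (show (0 : ℝ) < 2 by norm_num) n]
  have key : ∀ i < q, psi q i x * (1 - psi q i x) ≤
      6 / 5 * (q * (x * (1 - x))) * Real.exp (-(1 / 2 * i)) := by
    intro i hi
    have h0 := psi_nonneg hx0.le (by linarith) q i
    have h1 := psi_le_one hx0.le (by linarith) q i hi
    have h2 : psi q i x * (1 - psi q i x) ≤ psi q i x := by nlinarith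
    have h3 := psi_le_choose hx0.le (by linarith) q i hi
    have h4 : (q.choose (i + 1) : ℝ) ≤ (q : ℝ) ^ (i + 1) / ((i + 1).factorial : ℝ) :=
      Nat.choose_le_pow_div (i + 1) q
    have he : (3 / 5 : ℝ) ≤ Real.exp (-(1 / 2)) := by
      have : Real.exp (1 / 2) ≤ 5 / 3 := by
        have := exp_quad (u := 1 / 2) (by rw [abs_le]; norm_num)
        have h6 := Real.exp_bound' (x := 1 / 2) (by norm_num) (by norm_num) (n := 4) (by norm_num)
        norm_num [Finset.sum_range_succ, Nat.factorial] at h6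
        linarith
      rw [Real.exp_neg, show (3 / 5 : ℝ) = (5 / 3)⁻¹ by norm_num]
      exact inv_anti₀ (Real.exp_pos _) this
    calc _ ≤ psi q i x := h2
      _ ≤ _ := h3
      _ ≤ ((q : ℝ) ^ (i + 1) / ((i + 1).factorial : ℝ)) * x ^ (i + 1) := by gcongr
      _ = (q * x) ^ (i + 1) / ((i + 1).factorial : ℝ) := by rw [mul_pow]; ring
      _ ≤ (q * x) ^ (i + 1) / 2 ^ i := by
          gcongr
          exact hfac i
      _ = (q * x) * ((q * x) / 2) ^ i := by rw [pow_succ, div_pow]; ring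
      _ ≤ (6 / 5 * (q * (x * (1 - x)))) * (Real.exp (-(1 / 2))) ^ i := by
          have hμ3 : (q : ℝ) * x / 2 ≤ Real.exp (-(1 / 2)) := by linarith
          have hμ0 : 0 ≤ (q : ℝ) * x := by positivity
          exact mul_le_mul hμ2 (pow_le_pow_left₀ (by positivity) hμ3 i) (by positivity)
            (hμ0.trans hμ2)
      _ = _ := by
          rw [← Real.exp_nat_mul]; congr 2; ring
  have hs0 : 0 < (q : ℝ) * (x * (1 - x)) := by
    have : 0 < 1 - x := by linarith
    positivity
  calc _ ≤ ∑ i ∈ Finset.range q, (6 / 5 : ℝ) ^ β * (q * (x * (1 - x))) ^ β *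
        Real.exp (-((β / 2) * i)) := by
        refine Finset.sum_le_sum fun i hi => ?_
        have hi := Finset.mem_range.1 hi
        have h0 := psi_nonneg hx0.le (by linarith) q i
        have h1 := psi_le_one hx0.le (by linarith) q i hi
        rw [Vfun]
        refine (Real.rpow_le_rpow (mul_nonneg h0 (by linarith)) (key i hi) hβ.le).trans ?_
        rw [Real.mul_rpow (by positivity) (Real.exp_pos _).le, Real.mul_rpow (by norm_num) hs0.le,
          ← Real.exp_mul]
        apply le_of_eq; congr 2; ring
    _ ≤ (6 / 5 : ℝ) ^ β * (q * (x * (1 - x))) ^ β * (1 + 1 / (β / 2)) := by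
        rw [← Finset.mul_sum]
        gcongr
        exact geo_exp (by positivity) q
    _ ≤ (6 / 5) * (q * (x * (1 - x))) ^ β * (5 / 2 / β) := by
        gcongr
        · calc (6 / 5 : ℝ) ^ β ≤ (6 / 5 : ℝ) ^ (1 : ℝ) :=
              Real.rpow_le_rpow_of_exponent_le (by norm_num) (by linarith)
            _ = _ := by simp
        · rw [show 1 + 1 / (β / 2) = (β + 2) / β by field_simp]
          gcongr
          linarith
    _ = _ := by ring

lemma beta_beta {β : ℝ} (hβ : 0 < β) : 2 / 3 ≤ β ^ β := by
  have h1 : β * Real.log (1 / β) ≤ Real.exp (-1) := by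
    have h := Real.add_one_le_exp (Real.log (1 / β) - 1)
    rw [Real.exp_sub, Real.exp_log (by positivity)] at h
    have : Real.log (1 / β) ≤ 1 / β / Real.exp 1 := by linarith
    calc β * Real.log (1 / β) ≤ β * (1 / β / Real.exp 1) := by gcongr
      _ = _ := by rw [Real.exp_neg]; field_simp
  have h2 : Real.exp (-1) ≤ 37 / 100 := by
    linarith [Real.exp_neg_one_lt_d9]
  have h3 : Real.exp (37 / 100) ≤ 3 / 2 := by
    have h6 := Real.exp_bound' (x := 37 / 100) (by norm_num) (by norm_num) (n := 4) (by norm_num)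
    norm_num [Finset.sum_range_succ, Nat.factorial] at h6
    linarith
  have h4 : (3 / 2 : ℝ)⁻¹ ≤ Real.exp (-(37 / 100)) := by
    rw [Real.exp_neg]; exact inv_anti₀ (Real.exp_pos _) h3
  rw [Real.rpow_def_of_pos hβ]
  have : -(37 / 100) ≤ Real.log β * β := by
    rw [one_div, Real.log_inv] at h1
    linarith
  calc (2 / 3 : ℝ) = (3 / 2 : ℝ)⁻¹ := by norm_num
    _ ≤ _ := h4
    _ ≤ _ := Real.exp_le_exp.2 this

lemma sqrt_num {u e : ℝ} (hu : 3 / 10 ≤ u) (hu1 : u ≤ 1) (he : 0 ≤ e)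
    (h : e ≤ 1 + 3 / 4 * u + 27 / 64 * u ^ 2) : (e * (5 / 2) / 6) ^ 2 ≤ u := by
  have h1 : e ^ 2 ≤ (1 + 3 / 4 * u + 27 / 64 * u ^ 2) ^ 2 := pow_le_pow_left₀ he h 2
  have k : 0 ≤ (u - 3 / 10) * (1 - u) := mul_nonneg (by linarith) (by linarith)
  have k3 : 0 ≤ u * ((u - 3 / 10) * (1 - u)) := mul_nonneg (by linarith) k
  have k4 : 0 ≤ u ^ 2 * ((u - 3 / 10) * (1 - u)) := mul_nonneg (sq_nonneg u) k
  ring_nf at h1 k k3 k4 ⊢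
  linarith

/-- main bound in normalized form -/
lemma S_main (q : ℕ) (hq : 2 ≤ q) (β : ℝ) (hβ : 0 < β) (hβ1 : β ≤ 1 / 2)
    (x : ℝ) (hx0 : 0 < x) (hx1 : x < 1) :
    ∑ i ∈ Finset.range q, Vfun β (psi q i x) ≤
      3 * (q : ℝ) ^ (1 / 2 - β) * β ^ (-(1 / 2) : ℝ) * 4 ^ β * (q * (x * (1 - x))) ^ β := by
  have hq0 : (0 : ℝ) < q := by positivity
  set s := (q : ℝ) * (x * (1 - x)) with hs
  have hy0 : 0 < x * (1 - x) := mul_pos hx0 (by linarith)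
  have hs0 : 0 < s := by positivity
  have hs4 : 4 * s ≤ q := by
    have : 4 * (x * (1 - x)) ≤ 1 := by nlinarith [sq_nonneg (2 * x - 1)]
    nlinarith
  have hbb := beta_beta hβ
  rcases le_or_gt ((q : ℝ) * β) 4 with hqb | hqb
  · -- trivial regime
    have h1 : ∑ i ∈ Finset.range q, Vfun β (psi q i x) ≤ ∑ i ∈ Finset.range q, s ^ β := by
      refine Finset.sum_le_sum fun i hi => ?_
      have hi := Finset.mem_range.1 hi
      have h0 := psi_nonneg hx0.le hx1.le q i
      have h1 := psi_le_one hx0.le hx1.le q i hi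
      exact Real.rpow_le_rpow (mul_nonneg h0 (by linarith)) (psi_var hx0.le hx1.le q i hi) hβ.le
    refine h1.trans ?_
    rw [Finset.sum_const, Finset.card_range, nsmul_eq_mul]
    refine mul_le_mul_of_nonneg_right ?_ (by positivity)
    have e1 : (q : ℝ) = (q : ℝ) ^ (1 / 2 - β) * (q : ℝ) ^ (1 / 2 + β) := by
      rw [← Real.rpow_add hq0]; norm_num
    have h2 : (q : ℝ) ^ (1 / 2 + β) ≤ 3 * β ^ (-(1 / 2) : ℝ) * 4 ^ β := by
      have h3 : (q : ℝ) ≤ 4 * β⁻¹ := by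
        rw [← div_eq_mul_inv, le_div_iff₀ hβ]; exact hqb
      calc (q : ℝ) ^ (1 / 2 + β) ≤ (4 * β⁻¹) ^ (1 / 2 + β) :=
            Real.rpow_le_rpow hq0.le h3 (by linarith)
        _ = 2 * 4 ^ β * β ^ (-(1 / 2) : ℝ) * (β ^ β)⁻¹ := by
            rw [Real.mul_rpow (by norm_num) (by positivity), Real.inv_rpow hβ.le,
              Real.rpow_add hβ, Real.rpow_add (by norm_num), Real.rpow_neg hβ.le, mul_inv,
              ← Real.sqrt_eq_rpow, show Real.sqrt 4 = 2 by
                rw [show (4 : ℝ) = 2 ^ 2 by norm_num]; exact Real.sqrt_sq (by norm_num)]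
            ring
        _ ≤ 2 * 4 ^ β * β ^ (-(1 / 2) : ℝ) * (2 / 3)⁻¹ := by gcongr
        _ = _ := by ring
    calc (q : ℝ) = _ := e1
      _ ≤ (q : ℝ) ^ (1 / 2 - β) * (3 * β ^ (-(1 / 2) : ℝ) * 4 ^ β) := by gcongr
      _ = _ := by ring
  · -- reduction
    have red : ∀ M : ℝ, 0 < M → 4 * M ≤ q →
        6 * M ^ (1 / 2 - β) * β ^ (-(1 / 2) : ℝ) * s ^ β ≤
        3 * (q : ℝ) ^ (1 / 2 - β) * β ^ (-(1 / 2) : ℝ) * 4 ^ β * s ^ β := by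
      intro M hM hMq
      have h1 : (4 * M) ^ (1 / 2 - β) ≤ (q : ℝ) ^ (1 / 2 - β) :=
        Real.rpow_le_rpow (by positivity) hMq (by linarith)
      have h2 : (4 * M) ^ (1 / 2 - β) * 4 ^ β = 2 * M ^ (1 / 2 - β) := by
        rw [Real.mul_rpow (by norm_num) hM.le, Real.rpow_sub (by norm_num), ← Real.sqrt_eq_rpow,
          show Real.sqrt 4 = 2 by
                rw [show (4 : ℝ) = 2 ^ 2 by norm_num]; exact Real.sqrt_sq (by norm_num)]
        field_simp
      calc _ = 3 * (2 * M ^ (1 / 2 - β)) * β ^ (-(1 / 2) : ℝ) * s ^ β := by ring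
        _ = 3 * (4 * M) ^ (1 / 2 - β) * β ^ (-(1 / 2) : ℝ) * 4 ^ β * s ^ β := by rw [← h2]; ring
        _ ≤ _ := by gcongr
    rcases le_or_gt 1 (β * s) with hbs | hbs
    · -- large variance
      refine le_trans ?_ (red s hs0 hs4)
      have hr : 0 < Real.sqrt (β * s) := Real.sqrt_pos.2 (by positivity)
      have hr1 : 1 ≤ Real.sqrt (β * s) := Real.one_le_sqrt.2 hbs
      have hr2 : Real.sqrt (β * s) ^ 2 = β * s := Real.sq_sqrt (by positivity)
      have h := S_chern (t := 1 / Real.sqrt (β * s)) hx0.le hx1.le (by positivity)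
        (by rw [div_le_one hr]; exact hr1) hβ q
      rw [← hs] at h
      have e1 : β * (1 / Real.sqrt (β * s)) ^ 2 * s = 1 := by
        rw [div_pow, hr2]; field_simp
      rw [e1] at h
      have e2 : 2 / (β * (1 / Real.sqrt (β * s))) = 2 * (Real.sqrt (β * s) / β) := by
        field_simp
      rw [e2] at h
      have e3 : 6 * s ^ (1 / 2 - β) * β ^ (-(1 / 2) : ℝ) * s ^ β = 6 * (Real.sqrt (β * s) / β) := by
        have : s ^ (1 / 2 - β) * s ^ β = s ^ (1 / 2 : ℝ) := by
          rw [← Real.rpow_add hs0]; congr 1; ring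
        have h5 : β ^ (-(1 / 2) : ℝ) = β ^ (1 / 2 : ℝ) / β := by
          rw [eq_div_iff hβ.ne']
          nth_rewrite 2 [← Real.rpow_one β]
          rw [← Real.rpow_add hβ]; norm_num
        rw [Real.sqrt_eq_rpow, Real.mul_rpow hβ.le hs0.le, mul_right_comm, mul_assoc 6, this, h5]
        ring
      rw [e3]
      refine h.trans ?_
      have h6 : 2 ≤ Real.sqrt (β * s) / β := by
        rw [le_div_iff₀ hβ]; linarith
      have h7 : Real.exp (3 / 4 * 1) ≤ 12 / 5 := by
        have := exp_quad (u := 3 / 4) (by rw [abs_le]; norm_num)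
        norm_num at this ⊢
        linarith
      nlinarith
    · -- small variance
      refine le_trans ?_ (red β⁻¹ (by positivity) (by
        rw [← div_eq_mul_inv, div_le_iff₀ hβ]; exact hqb.le))
      have e1 : 6 * β⁻¹ ^ (1 / 2 - β) * β ^ (-(1 / 2) : ℝ) * s ^ β = 6 / β * (β ^ β * s ^ β) := by
        have : β⁻¹ ^ (1 / 2 - β) * β ^ (-(1 / 2) : ℝ) = β ^ β / β := by
          rw [eq_div_iff hβ.ne', Real.inv_rpow hβ.le, ← Real.rpow_neg hβ.le]
          calc _ = β ^ (-(1 / 2 - β)) * β ^ (-(1 / 2) : ℝ) * β ^ (1 : ℝ) := by rw [Real.rpow_one]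
            _ = _ := by rw [← Real.rpow_add hβ, ← Real.rpow_add hβ]; congr 1; ring
        rw [mul_assoc 6, this]; ring
      rw [e1]
      rcases le_or_gt s 1 with hs1 | hs1
      · have hq8 : 8 ≤ q := by
          have : (8 : ℝ) ≤ q := by nlinarith
          exact_mod_cast this
        have h : ∑ i ∈ Finset.range q, Vfun β (psi q i x) ≤ 3 / β * s ^ β := by
          rcases le_total x (1 / 2) with h | h
          · exact S_small hx0 h hβ hβ1 q hq8 hs1
          · have := S_small (x := 1 - x) (by linarith) (by linarith) hβ hβ1 q hq8
              (by rw [show (1 - x) * (1 - (1 - x)) = x * (1 - x) by ring]; exact hs1)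
            rw [S_symm, show (1 - x) * (1 - (1 - x)) = x * (1 - x) by ring] at this
            exact this
        refine h.trans ?_
        have : 0 < s ^ β := by positivity
        calc 3 / β * s ^ β ≤ 6 / β * (2 / 3 * s ^ β) := by
              rw [show 6 / β * (2 / 3 * s ^ β) = 4 / β * s ^ β by ring]
              gcongr; norm_num
          _ ≤ _ := by gcongr
      · have h := S_chern (t := 1) hx0.le hx1.le (by norm_num) le_rfl hβ q
        rw [← hs] at h
        simp only [one_pow, mul_one] at h
        refine h.trans ?_
        have h2 : 2 / β + 1 ≤ 5 / 2 / β := by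
          rw [show 2 / β + 1 = (2 + β) / β by field_simp]
          gcongr; linarith
        have h3 : Real.exp (3 / 4 * (β * s)) * (5 / 2) ≤ 6 * (β ^ β * s ^ β) := by
          set u := β * s
          have hu0 : 0 < u := by positivity
          have hE := exp_quad (u := 3 / 4 * u) (by rw [abs_le]; constructor <;> linarith)
          rcases le_or_gt u (3 / 10) with hu | hu
          · have : 1 ≤ s ^ β := Real.one_le_rpow hs1.le hβ.le
            have : 2 / 3 * 1 ≤ β ^ β * s ^ β := by gcongr
            nlinarith
          · rw [← Real.mul_rpow hβ.le hs0.le]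
            have h5 : u ^ (1 / 2 : ℝ) ≤ u ^ β :=
              Real.rpow_le_rpow_of_exponent_ge hu0 hbs.le hβ1
            rw [← Real.sqrt_eq_rpow] at h5
            have h6 : Real.exp (3 / 4 * u) * (5 / 2) / 6 ≤ Real.sqrt u := by
              apply Real.le_sqrt_of_sq_le
              exact sqrt_num hu.le hbs.le (Real.exp_pos _).le (by linarith)
            linarith
        calc _ ≤ Real.exp (3 / 4 * (β * s)) * (5 / 2 / β) := by gcongr
          _ = (Real.exp (3 / 4 * (β * s)) * (5 / 2)) / β := by ring
          _ ≤ (6 * (β ^ β * s ^ β)) / β := by gcongr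
          _ = _ := by ring

theorem stmt_13 (q : ℕ) (hq : 2 ≤ q) (β : ℝ) (hβ : β ∈ Set.Ioc (0 : ℝ) (1 / 2))
    (x : ℝ) (hx : x ∈ Set.Ioo (0 : ℝ) 1) :
    (1 / (q : ℝ)) * ∑ i ∈ Finset.range q, Vfun β (psi q i x)
      ≤ (6 / Real.sqrt ((q : ℝ) * β)) * (1 / 4 : ℝ) ^ (1 / 2 - β) * Vfun β x := by
  obtain ⟨hb0, hb1⟩ := hβ
  obtain ⟨hx0, hx1⟩ := hx
  have h := S_main q hq β hb0 hb1 x hx0 hx1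
  have hq0 : (0 : ℝ) < q := by positivity
  have hy0 : 0 < x * (1 - x) := mul_pos hx0 (by linarith)
  rw [one_div, inv_mul_le_iff₀ hq0]
  refine h.trans (le_of_eq ?_)
  have e2 : Real.sqrt 4 = 2 := by
    rw [show (4 : ℝ) = 2 ^ 2 by norm_num]; exact Real.sqrt_sq (by norm_num)
  rw [Vfun, Real.mul_rpow hq0.le hy0.le, one_div 4, Real.inv_rpow (by norm_num),
    Real.rpow_sub (show (0 : ℝ) < 4 by norm_num), Real.rpow_sub hq0, Real.rpow_neg hb0.le, ← Real.sqrt_eq_rpow,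
    ← Real.sqrt_eq_rpow, ← Real.sqrt_eq_rpow, e2, Real.sqrt_mul hq0.le]
  have h1 : 0 < Real.sqrt q := Real.sqrt_pos.2 hq0
  have h2 : 0 < Real.sqrt β := Real.sqrt_pos.2 hb0
  have h3 : Real.sqrt q ^ 2 = q := Real.sq_sqrt hq0.le
  have h4 : (0 : ℝ) < (q : ℝ) ^ β := by positivity
  field_simp
  rw [h3]
  ring
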